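/- Let G be a finite pseudo-solvable group that is not solvable, and suppose G has no element of order 6, no element of order 10, and no element of order 15. Then for every prime r dividing |G| with r ∉ {2,3,5}, G has an element of order 2r and an element of order 3r. (Equivalently, the induced subgraph of the complement of the prime graph on {r,2,3,5} is either just the triangle {2,3,5}, or that triangle together with the single additional edge 5–r.) -/

import Mathlib

/-- A finite group is *pseudo-solvable* if it has a subnormal series whose factors are
all cyclic or isomorphic to the alternating group `A₅`. -/
def IsPseudoSolvable (G : Type*) [Group G] : Prop :=
  ∃ (n : ℕ) (H : Fin (n + 1) → Subgroup G),
    H 0 = ⊥ ∧ H (Fin.last n) = ⊤ ∧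
    ∀ i : Fin n, H i.castSucc ≤ H i.succ ∧
      ∃ hN : ((H i.castSucc).subgroupOf (H i.succ)).Normal,
        haveI := hN
        IsCyclic (H i.succ ⧸ (H i.castSucc).subgroupOf (H i.succ)) ∨
        Nonempty ((H i.succ ⧸ (H i.castSucc).subgroupOf (H i.succ)) ≃* alternatingGroup (Fin 5))

/-!
The absence of elements of order 6 propagates `A₅` up a subnormal series, so that a non-solvable
`G` maps onto `A₅`. If a normal subgroup `H` maps onto `A₅` with kernel `K`, then by Goursat's
lemma a `G`-conjugate of `K` other than `K` would give a map of `H` onto `A₅ × A₅`, which has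
elements of order 6. So `K` is normal in `G`, and conjugation on `H / K` maps `G` to `Aut A₅ = S₅`;
the image contains `A₅`, and is not `S₅`, which has elements of order 6.

Let `π : G → A₅` be onto and let `r ∉ {2, 3, 5}` be a prime dividing `|G|`. By the Frattini
argument some `M ≤ G` still maps onto `A₅` and normalises an abelian `r`-group `V ≠ 1`. If `y` acts
on `V` without nontrivial fixed points, then `1 + y + ⋯ + y ^ (n - 1) = 0` on `V`, where `n` is the
order of `y`. A second Frattini argument lifts `A₄ ≤ A₅` to a `2`-subgroup `Q ≰ ker π` of `M`
normalised by an element `x` of order 3.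

* An involution of `Z(Q)` and its conjugate under `x` generate a four-group. If `M` had no element
  of order `2r`, each of its three involutions would act on `V` as `-1`, but `(-1)(-1) = 1`.
* All elements of `Qx` have order 3. If `M` had no element of order `3r`, then
  `1 + gx + (gx) ^ 2 = 0` on `V` for all `g ∈ Q`, and summing over `g` gives `∑ g = |Q|`, whence `Q`
  acts trivially on `V`. The kernel of the action is then not contained in `ker π`, so it maps onto
  `A₅` and contains elements of order 3, which therefore commute with elements of order `r`.
-/

open Equiv Function
open Subgroup (normalizer)

theorem exists_mem_orderOf_eq_of_mem_map {G A : Type*} [Group G] [Finite G] [Group A] (π : G →* A)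
    {H : Subgroup G} {a : A} (ha : a ∈ H.map π) : ∃ g ∈ H, orderOf g = orderOf a := by
  obtain ⟨g, hg, rfl⟩ := ha
  exact ⟨_, H.pow_mem hg _, orderOf_pow_orderOf_div (orderOf_pos g).ne' (orderOf_map_dvd π g)⟩

theorem orderOf_ne_of_surjective {G A : Type*} [Group G] [Finite G] [Group A] {π : G →* A}
    (hπ : Surjective π) {n : ℕ} (h : ∀ g : G, orderOf g ≠ n) (a : A) : orderOf a ≠ n := by
  rintro rfl
  obtain ⟨g, -, hg⟩ := exists_mem_orderOf_eq_of_mem_map π (H := ⊤) (a := a)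
    (by rw [Subgroup.map_top_of_surjective π hπ]; trivial)
  exact h g hg

theorem orderOf_ne_subgroup {G : Type*} [Group G] {n : ℕ} (h : ∀ g : G, orderOf g ≠ n)
    (H : Subgroup G) (x : H) : orderOf x ≠ n :=
  Subgroup.orderOf_coe x ▸ h x

theorem ker_le_ker_of_forall_orderOf_ne {H A B : Type*} [Group H] [Finite H] [Group A]
    [IsSimpleGroup A] [Group B] {p q : ℕ} [hp : Fact p.Prime] [hq : Fact q.Prime] (hpq : p ≠ q)
    (hA : p ∣ Nat.card A) (hB : q ∣ Nat.card B)
    (hH : ∀ x : H, orderOf x ≠ p * q) {f : H →* A} {f' : H →* B}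
    (hf : Surjective f) (hf' : Surjective f') : f'.ker ≤ f.ker := by
  have : Finite A := .of_surjective f hf
  have : Finite B := .of_surjective f' hf'
  by_contra hn
  have htop : f'.ker.map f = ⊤ :=
    (Subgroup.Normal.map inferInstance f hf).eq_bot_or_eq_top.resolve_left fun h =>
      hn (f'.ker.map_eq_bot_iff.1 h)
  obtain ⟨a, ha⟩ := exists_prime_orderOf_dvd_card' p hA
  obtain ⟨b, hb⟩ := exists_prime_orderOf_dvd_card' q hB
  obtain ⟨x, rfl⟩ := hf' b
  obtain ⟨k, hk, hkx⟩ : (f x)⁻¹ * a ∈ f'.ker.map f := htop ▸ Subgroup.mem_top _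
  have hxk : (f.prod f') (x * k) = (a, f' x) := by
    simp [hkx, f'.mem_ker.1 hk]
  have hord : orderOf (a, f' x) = p * q := by
    rw [Prod.orderOf_mk, ha, hb, ((Nat.coprime_primes hp.out hq.out).2 hpq).lcm_eq_mul]
  obtain ⟨g, -, hg⟩ := exists_mem_orderOf_eq_of_mem_map (f.prod f') (H := ⊤) ⟨_, trivial, hxk⟩
  exact hH g (hg.trans hord)

theorem natCard_alternatingGroup_five : Nat.card (alternatingGroup (Fin 5)) = 60 := by
  rw [nat_card_alternatingGroup]; simp [Nat.factorial]

theorem dvd_natCard_ker_of_surjective {G : Type*} [Group G] {π : G →* alternatingGroup (Fin 5)}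
    (hπ : Surjective π) {r : ℕ} (hr : r.Prime) (hr2 : r ≠ 2) (hr3 : r ≠ 3) (hr5 : r ≠ 5)
    (hrG : r ∣ Nat.card G) : r ∣ Nat.card π.ker := by
  have hcop : r.Coprime 60 :=
    ((((Nat.coprime_primes hr Nat.prime_two).2 hr2).pow_right 2).mul_right
      ((Nat.coprime_primes hr Nat.prime_three).2 hr3)).mul_right
      ((Nat.coprime_primes hr Nat.prime_five).2 hr5)
  refine hcop.dvd_of_dvd_mul_right (hrG.trans (dvd_of_eq ?_))
  rw [← π.ker.card_mul_index, Subgroup.index_ker, π.range_eq_top_of_surjective hπ,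
    Subgroup.card_top, natCard_alternatingGroup_five]

theorem eq_top_of_thirty_dvd_card {E : Subgroup (alternatingGroup (Fin 5))}
    (h : 30 ∣ Nat.card E) : E = ⊤ := by
  have hmul := E.card_mul_index
  rw [natCard_alternatingGroup_five] at hmul
  obtain ⟨m, hm⟩ := h
  have hidx : m * E.index = 2 := by grind
  rcases (Nat.dvd_prime Nat.prime_two).1 (Dvd.intro_left m hidx) with h1 | h2
  · exact Subgroup.index_eq_one.1 h1
  · have := Subgroup.normal_of_index_eq_two h2
    rcases this.eq_bot_or_eq_top with rfl | h
    · rw [Subgroup.index_bot, natCard_alternatingGroup_five] at h2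
      omega
    · exact h

/-- A pair satisfying the relations of the `(2, 3, 5)` triangle group with exact orders; such pairs
serve as standard generators of `alternatingGroup (Fin 5)`. -/
def IsTrianglePair {G : Type*} [Group G] (a b : G) : Prop :=
  orderOf a = 2 ∧ orderOf b = 3 ∧ orderOf (a * b) = 5

namespace IsTrianglePair

theorem map {G H : Type*} [Group G] [Group H] {a b : G} (h : IsTrianglePair a b)
    {f : G →* H} (hf : Injective f) : IsTrianglePair (f a) (f b) := by
  simpa only [IsTrianglePair, ← map_mul, orderOf_injective f hf] using h

theorem closure_eq_top {a b : alternatingGroup (Fin 5)} (h : IsTrianglePair a b) :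
    Subgroup.closure {a, b} = ⊤ := by
  have ha : a ∈ Subgroup.closure {a, b} := Subgroup.subset_closure (by simp)
  have hb : b ∈ Subgroup.closure {a, b} := Subgroup.subset_closure (by simp)
  have h2 := h.1 ▸ Subgroup.orderOf_dvd_natCard _ ha
  have h3 := h.2.1 ▸ Subgroup.orderOf_dvd_natCard _ hb
  have h5 := h.2.2 ▸ Subgroup.orderOf_dvd_natCard _ (mul_mem ha hb)
  exact eq_top_of_thirty_dvd_card (by omega)

set_option maxRecDepth 100000 in
theorem exists_conj_eq_standard {a b : Perm (Fin 5)} (h : IsTrianglePair a b) :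
    ∃ s : Perm (Fin 5), s * (swap 0 3 * swap 1 4) * s⁻¹ = a ∧
      s * (swap 0 1 * swap 1 2) * s⁻¹ = b := by
  -- Normalising `b` first, then `a` by the centraliser of `b`, avoids a search over all pairs.
  have hthree : ∀ b : Perm (Fin 5), b ^ 3 = 1 → b ≠ 1 →
      ∃ s : Perm (Fin 5), s * (swap 0 1 * swap 1 2) * s⁻¹ = b := by
    decide +kernel
  have htwo : ∀ a : Perm (Fin 5), a ^ 2 = 1 → a ≠ 1 → (a * (swap 0 1 * swap 1 2)) ^ 5 = 1 →
      ∃ s : Perm (Fin 5), s * (swap 0 3 * swap 1 4) * s⁻¹ = a ∧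
        s * (swap 0 1 * swap 1 2) * s⁻¹ = swap 0 1 * swap 1 2 := by
    decide +kernel
  obtain ⟨hb, hb'⟩ := orderOf_eq_prime_iff.1 h.2.1
  obtain ⟨t, rfl⟩ := hthree b hb hb'
  obtain ⟨ha2, -, hab⟩ := h.map (f := (MulAut.conj t⁻¹).toMonoidHom) (MulAut.conj t⁻¹).injective
  obtain ⟨ha, ha'⟩ := orderOf_eq_prime_iff.1 ha2
  obtain ⟨s, hsa, hsb⟩ := htwo _ ha ha'
    (orderOf_dvd_iff_pow_eq_one.1 (by simpa [mul_assoc] using hab.dvd))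
  refine ⟨t * s, ?_, ?_⟩
  · simpa [mul_assoc] using congr(t * $hsa * t⁻¹)
  · simpa [mul_assoc] using congr(t * $hsb * t⁻¹)

theorem exists_conj {a b a' b' : Perm (Fin 5)} (h : IsTrianglePair a b)
    (h' : IsTrianglePair a' b') :
    ∃ s : Perm (Fin 5), s * a * s⁻¹ = a' ∧ s * b * s⁻¹ = b' := by
  obtain ⟨s, rfl, rfl⟩ := h.exists_conj_eq_standard
  obtain ⟨t, rfl, rfl⟩ := h'.exists_conj_eq_standard
  exact ⟨t * s⁻¹, by group, by group⟩

set_option maxRecDepth 100000 in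
theorem eq_one_of_commute {a b : Perm (Fin 5)} (h : IsTrianglePair a b) {s : Perm (Fin 5)}
    (ha : Commute s a) (hb : Commute s b) : s = 1 := by
  have hcentralizer : ∀ s : Perm (Fin 5), s * (swap 0 3 * swap 1 4) = swap 0 3 * swap 1 4 * s →
      s * (swap 0 1 * swap 1 2) = swap 0 1 * swap 1 2 * s → s = 1 := by
    decide +kernel
  obtain ⟨t, rfl, rfl⟩ := h.exists_conj_eq_standard
  have := hcentralizer (t⁻¹ * s * t) (by simpa [mul_assoc] using congr(t⁻¹ * $ha * t))
    (by simpa [mul_assoc] using congr(t⁻¹ * $hb * t))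
  simpa [mul_assoc, inv_mul_eq_one] using this

end IsTrianglePair

theorem exists_isTrianglePair : ∃ a b : alternatingGroup (Fin 5), IsTrianglePair a b := by
  have : Fact (Nat.Prime 5) := ⟨Nat.prime_five⟩
  refine ⟨⟨swap 0 3 * swap 1 4, Perm.mem_alternatingGroup.2 (by decide)⟩,
    ⟨swap 0 1 * swap 1 2, Perm.mem_alternatingGroup.2 (by decide)⟩,
    orderOf_eq_prime ?_ ?_, orderOf_eq_prime ?_ ?_, orderOf_eq_prime ?_ ?_⟩ <;> decide +kernel

theorem conjNormal_alternatingGroup_five_bijective :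
    Bijective (MulAut.conjNormal : Perm (Fin 5) →* MulAut (alternatingGroup (Fin 5))) := by
  obtain ⟨a, b, hab⟩ := exists_isTrianglePair
  have hval := hab.map (Subgroup.subtype_injective (alternatingGroup (Fin 5)))
  refine ⟨(injective_iff_map_eq_one _).2 fun s hs => ?_, fun φ => ?_⟩
  · have hcomm (x : alternatingGroup (Fin 5)) : s * x = x * s := by
      simpa [mul_inv_eq_iff_eq_mul] using congr((($hs x : alternatingGroup (Fin 5)) : Perm (Fin 5)))
    exact hval.eq_one_of_commute (hcomm a) (hcomm b)
  · obtain ⟨s, hsa, hsb⟩ := hval.exists_conj ((hab.map (f := φ.toMonoidHom) φ.injective).map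
      (Subgroup.subtype_injective (alternatingGroup (Fin 5))))
    refine ⟨s, MulEquiv.toMonoidHom_injective
      (MonoidHom.eq_of_eqOn_dense hab.closure_eq_top ?_)⟩
    rintro x (rfl | rfl)
    · exact Subtype.ext hsa
    · exact Subtype.ext hsb

theorem range_eq_alternatingGroup_five {G : Type*} [Group G] [Finite G]
    (h6 : ∀ g : G, orderOf g ≠ 6) {F : G →* Perm (Fin 5)}
    (hF : alternatingGroup (Fin 5) ≤ F.range) :
    F.range = alternatingGroup (Fin 5) := by
  refine le_antisymm (fun u hu => ?_) hF
  by_contra hodd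
  have hτ : orderOf (swap 0 1 * swap 1 2 * swap 3 4 : Perm (Fin 5)) = 6 := by
    rw [orderOf_eq_iff (by simp)]
    decide +kernel
  have hmem : (swap 0 1 * swap 1 2 * swap 3 4 : Perm (Fin 5)) ∈ (⊤ : Subgroup G).map F := by
    rw [← MonoidHom.range_eq_map, ← mul_inv_cancel_right (swap 0 1 * swap 1 2 * swap 3 4) u]
    refine mul_mem (hF ?_) (inv_mem hu)
    have : Perm.sign u = -1 := (Int.units_eq_one_or _).resolve_left hodd
    simp [Perm.mem_alternatingGroup, this, Perm.sign_swap']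
  obtain ⟨g, -, hg⟩ := exists_mem_orderOf_eq_of_mem_map F hmem
  exact h6 g (hg.trans hτ)

theorem exists_surjective_of_normal_mulEquiv {G : Type*} [Group G] [Finite G]
    (h6 : ∀ g : G, orderOf g ≠ 6) {H : Subgroup G} [H.Normal] (e : H ≃* alternatingGroup (Fin 5)) :
    ∃ f : G →* alternatingGroup (Fin 5), Surjective f := by
  let ψ := MulEquiv.ofBijective _ conjNormal_alternatingGroup_five_bijective
  let F : G →* Perm (Fin 5) :=
    (ψ.symm.toMonoidHom.comp (MulAut.congr e).toMonoidHom).comp MulAut.conjNormal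
  have hF (h : H) : F h = e h := by
    refine ψ.symm_apply_eq.2 (MulEquiv.ext fun x => Subtype.ext ?_)
    have hconj : MulAut.conjNormal (h : G) (e.symm x) = h * e.symm x * h⁻¹ := Subtype.ext (by simp)
    simp [ψ, hconj]
  have hrange : F.range = alternatingGroup (Fin 5) := range_eq_alternatingGroup_five h6 fun a ha =>
    ⟨e.symm ⟨a, ha⟩, by simp [hF]⟩
  exact ⟨(MulEquiv.subgroupCongr hrange).toMonoidHom.comp F.rangeRestrict,
    (MulEquiv.subgroupCongr hrange).surjective.comp F.rangeRestrict_surjective⟩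

theorem exists_surjective_of_normal_surjective {G : Type*} [Group G] [Finite G]
    (h6 : ∀ g : G, orderOf g ≠ 6) {H : Subgroup G} [H.Normal]
    {f : H →* alternatingGroup (Fin 5)} (hf : Surjective f) :
    ∃ f : G →* alternatingGroup (Fin 5), Surjective f := by
  have hker (g : G) : f.ker ≤ (f.comp (MulAut.conjNormal g).toMonoidHom).ker :=
    ker_le_ker_of_forall_orderOf_ne (p := 2) (q := 3) (by decide)
      (by rw [natCard_alternatingGroup_five]; decide)
      (by rw [natCard_alternatingGroup_five]; decide) (orderOf_ne_subgroup h6 H)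
      (hf.comp (MulAut.conjNormal g).surjective) hf
  let N : Subgroup G := f.ker.map H.subtype
  have : N.Normal := by
    refine ⟨?_⟩
    rintro _ ⟨k, hk, rfl⟩ g
    exact ⟨MulAut.conjNormal g k, hker g hk, by simp⟩
  let q : H →* G ⧸ N := (QuotientGroup.mk' N).comp H.subtype
  have hq : q.ker = f.ker := by
    rw [← MonoidHom.comap_ker, QuotientGroup.ker_mk']
    exact Subgroup.comap_map_eq_self_of_injective H.subtype_injective _
  have : q.range.Normal := by
    rw [MonoidHom.range_comp, H.range_subtype]
    exact Subgroup.Normal.map inferInstance _ (QuotientGroup.mk'_surjective N)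
  let e : q.range ≃* alternatingGroup (Fin 5) := ((QuotientGroup.quotientKerEquivRange q).symm.trans
    (QuotientGroup.quotientMulEquivOfEq hq)).trans
      (QuotientGroup.quotientKerEquivOfSurjective f hf)
  obtain ⟨F, hF⟩ := exists_surjective_of_normal_mulEquiv
    (orderOf_ne_of_surjective (QuotientGroup.mk'_surjective N) h6) e
  exact ⟨F.comp (QuotientGroup.mk' N), hF.comp (QuotientGroup.mk'_surjective N)⟩

theorem isSolvable_or_exists_surjective_of_quotient {G : Type*} [Group G] [Finite G]
    (h6 : ∀ g : G, orderOf g ≠ 6) {N : Subgroup G} [N.Normal]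
    (hN : Group.IsSolvable N ∨ ∃ f : N →* alternatingGroup (Fin 5), Surjective f)
    (hquot : IsCyclic (G ⧸ N) ∨ Nonempty ((G ⧸ N) ≃* alternatingGroup (Fin 5))) :
    Group.IsSolvable G ∨ ∃ f : G →* alternatingGroup (Fin 5), Surjective f := by
  rcases hN with hN | ⟨f, hf⟩
  · rcases hquot with hcyc | ⟨⟨φ⟩⟩
    · have : Group.IsSolvable (G ⧸ N) := Group.isSolvable_of_comm hcyc.commGroup.mul_comm
      exact .inl ((Group.isSolvable_iff_subgroup_quotient N).2 ⟨hN, this⟩)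
    · exact .inr ⟨φ.toMonoidHom.comp (QuotientGroup.mk' N),
        φ.surjective.comp (QuotientGroup.mk'_surjective N)⟩
  · exact .inr (exists_surjective_of_normal_surjective h6 hf)

namespace IsPseudoSolvable

theorem isSolvable_or_exists_surjective {G : Type*} [Group G] [Finite G]
    (hG : IsPseudoSolvable G) (h6 : ∀ g : G, orderOf g ≠ 6) :
    Group.IsSolvable G ∨ ∃ f : G →* alternatingGroup (Fin 5), Surjective f := by
  obtain ⟨n, H, h0, hlast, hstep⟩ := hG
  have transfer {K L : Type _} [Group K] [Group L] (e : K ≃* L)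
      (hK : Group.IsSolvable K ∨ ∃ f : K →* alternatingGroup (Fin 5), Surjective f) :
      Group.IsSolvable L ∨ ∃ f : L →* alternatingGroup (Fin 5), Surjective f :=
    hK.imp
      (fun _ : Group.IsSolvable K =>
        Group.isSolvable_of_surjective (f := e.toMonoidHom) e.surjective)
      fun ⟨f, hf⟩ => ⟨f.comp e.symm.toMonoidHom, hf.comp e.symm.surjective⟩
  have hseries (i : Fin (n + 1)) :
      Group.IsSolvable (H i) ∨ ∃ f : H i →* alternatingGroup (Fin 5), Surjective f := by
    induction i using Fin.induction with
    | zero => rw [h0]; exact .inl inferInstance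
    | succ i ih =>
      obtain ⟨hle, hN, hquot⟩ := hstep i
      exact isSolvable_or_exists_surjective_of_quotient
        (orderOf_ne_subgroup h6 _)
        (transfer (Subgroup.subgroupOfEquivOfLe hle).symm ih) hquot
  have htop := hseries (Fin.last n)
  rw [hlast] at htop
  exact transfer Subgroup.topEquiv htop

end IsPseudoSolvable

theorem normalizer_le_sup_normalizer_map_sylow {G : Type*} [Group G] [Finite G] {p : ℕ}
    [Fact p.Prime] {L : Subgroup G} (P : Sylow p L) :
    normalizer (L : Set G) ≤ L ⊔ normalizer (P.map L.subtype : Set G) := by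
  intro t ht
  let t' : normalizer (L : Set G) := ⟨t, ht⟩
  obtain ⟨l, hl⟩ := MulAction.exists_smul_eq L (t' • P) P
  have hmem : l * t ∈ normalizer (P.map L.subtype : Set G) := by
    apply Subgroup.mem_normalizer_fintype
    rintro _ ⟨x, hx, rfl⟩
    have hlx : MulAut.conj l • t' • x ∈ (l • t' • P : Sylow p L) :=
      Subgroup.smul_mem_pointwise_smul _ _ _ (Subgroup.smul_mem_pointwise_smul _ _ _ hx)
    rw [hl] at hlx
    refine ⟨_, hlx, ?_⟩
    change (l : G) * (t * x * t⁻¹) * (l : G)⁻¹ = l * t * x * (l * t)⁻¹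
    group
  simpa using mul_mem (Subgroup.mem_sup_left (inv_mem l.2)) (Subgroup.mem_sup_right hmem)

section Frattini

variable {G A : Type*} [Group G] [Finite G] [Group A] {π : G →* A} (hπ : Surjective π)
  {p : ℕ} [Fact p.Prime] {T : Subgroup A} (hT : IsPGroup p T)

include hπ hT

theorem map_map_sylow_comap (P : Sylow p (T.comap π)) :
    (P.map (T.comap π).subtype).map π = T := by
  have hsurj := π.subgroupComap_surjective_of_surjective T hπ
  have htop : P.map (π.subgroupComap T) = ⊤ :=
    ((P.mapSurjective hsurj).is_maximal' (hT.to_subgroup ⊤) le_top).symm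
  rw [Subgroup.map_map,
    show π.comp (T.comap π).subtype = T.subtype.comp (π.subgroupComap T) from rfl,
    ← Subgroup.map_map, htop, ← MonoidHom.range_eq_map, T.range_subtype]

theorem normalizer_le_map_normalizer_sylow_comap (P : Sylow p (T.comap π)) :
    normalizer (T : Set A) ≤
      (normalizer (P.map (T.comap π).subtype : Set G)).map π := by
  set Q := P.map (T.comap π).subtype
  have hQ : Q.map π = T := map_map_sylow_comap hπ hT P
  calc normalizer (T : Set A) = (normalizer (T.comap π : Set G)).map π := by
        rw [← Subgroup.comap_normalizer_eq_of_surjective T hπ,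
          Subgroup.map_comap_eq_self_of_surjective hπ]
    _ ≤ (T.comap π ⊔ normalizer (Q : Set G)).map π :=
        Subgroup.map_mono (normalizer_le_sup_normalizer_map_sylow P)
    _ = Q.map π ⊔ (normalizer (Q : Set G)).map π := by
        rw [Subgroup.map_sup, Subgroup.map_comap_eq_self_of_surjective hπ, hQ]
    _ = (normalizer (Q : Set G)).map π :=
        sup_eq_right.2 (Subgroup.map_mono Subgroup.le_normalizer)

end Frattini

theorem exists_normal_isMulCommutative_isPGroup {G : Type*} [Group G] {p : ℕ}
    [Fact p.Prime] {Q : Subgroup G} [Finite Q] [Q.Normal] [Nontrivial Q] (hQ : IsPGroup p Q) :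
    ∃ V : Subgroup G, V.Normal ∧ IsMulCommutative V ∧ Nontrivial V ∧ IsPGroup p V := by
  have := hQ.center_nontrivial
  exact ⟨(Subgroup.center Q).map Q.subtype, inferInstance, inferInstance,
    ((Subgroup.center Q).equivMapOfInjective _ Q.subtype_injective).injective.nontrivial,
    (hQ.to_subgroup _).map _⟩

theorem exists_map_eq_top_and_normal_isPGroup {G A : Type*} [Group G] [Finite G] [Group A]
    {π : G →* A} (hπ : Surjective π) {p : ℕ} [Fact p.Prime] (hp : p ∣ Nat.card π.ker) :
    ∃ M : Subgroup G, M.map π = ⊤ ∧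
      ∃ V : Subgroup M, V.Normal ∧ IsMulCommutative V ∧ Nontrivial V ∧ IsPGroup p V := by
  obtain ⟨P⟩ := Sylow.nonempty (p := p) (G := (⊥ : Subgroup A).comap π)
  set Q := P.map ((⊥ : Subgroup A).comap π).subtype
  have hM : (normalizer (Q : Set G)).map π = ⊤ := top_le_iff.1 <|
    (Subgroup.normalizer_eq_top (⊥ : Subgroup A)).ge.trans
      (normalizer_le_map_normalizer_sylow_comap hπ .of_bot P)
  have : Nontrivial (Q.subgroupOf (normalizer (Q : Set G))) := by
    rw [Subgroup.nontrivial_iff_ne_bot, Ne, Subgroup.subgroupOf_eq_bot,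
      disjoint_of_le_iff_left_eq_bot Subgroup.le_normalizer,
      Subgroup.map_eq_bot_iff_of_injective _ (Subgroup.subtype_injective _)]
    exact P.ne_bot_of_dvd_card hp
  have hQ : IsPGroup p (Q.subgroupOf (normalizer (Q : Set G))) :=
    (P.isPGroup'.map _).comap_subtype
  exact ⟨_, hM, exists_normal_isMulCommutative_isPGroup hQ⟩

theorem exists_mem_normalizer_isPGroup_two_orderOf_eq_three :
    ∃ T : Subgroup (alternatingGroup (Fin 5)), IsPGroup 2 T ∧ T ≠ ⊥ ∧
      ∃ t ∈ normalizer (T : Set (alternatingGroup (Fin 5))), orderOf t = 3 := by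
  let s : Finset (Fin 5) := {0, 1, 2, 3}
  have hs : Nat.card s = 4 := by rw [Nat.card_eq_finsetCard]; rfl
  let ι : alternatingGroup s →* alternatingGroup (Fin 5) := alternatingGroup.ofSubtype s
  have hι : Injective ι := alternatingGroup.ofSubtype_injective
  have hV := alternatingGroup.kleinFour_card_of_card_eq_four hs
  have := alternatingGroup.normal_kleinFour hs
  obtain ⟨c, hc⟩ := exists_prime_orderOf_dvd_card' (G := alternatingGroup s) 3
    (by rw [alternatingGroup.card_of_card_eq_four hs]; decide)
  refine ⟨(alternatingGroup.kleinFour s).map ι,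
    (IsPGroup.of_card (n := 2) hV).map ι, fun h => ?_, ι c,
    Subgroup.le_normalizer_map ι ⟨c, by simp [Subgroup.normalizer_eq_top], rfl⟩,
    (orderOf_injective ι hι c).trans hc⟩
  rw [Subgroup.map_eq_bot_iff_of_injective _ hι] at h
  simp [h] at hV

theorem exists_isPGroup_two_normalizer_orderOf_eq_three {G : Type*} [Group G] [Finite G]
    {π : G →* alternatingGroup (Fin 5)} (hπ : Surjective π) :
    ∃ Q : Subgroup G, IsPGroup 2 Q ∧ ¬ Q ≤ π.ker ∧
      ∃ x ∈ normalizer (Q : Set G), orderOf x = 3 := by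
  obtain ⟨T, hT, hTbot, t, htT, ht⟩ := exists_mem_normalizer_isPGroup_two_orderOf_eq_three
  obtain ⟨P⟩ := Sylow.nonempty (p := 2) (G := T.comap π)
  obtain ⟨x, hx, hxt⟩ := exists_mem_orderOf_eq_of_mem_map π
    (normalizer_le_map_normalizer_sylow_comap hπ hT P htT)
  refine ⟨_, P.isPGroup'.map _, fun hle => hTbot ?_, x, hx, hxt.trans ht⟩
  rw [← map_map_sylow_comap hπ hT P]
  exact (Subgroup.map_eq_bot_iff _).2 hle

theorem exists_commuting_involutions {G : Type*} [Group G] [Finite G] {Q : Subgroup G} [Q.Normal]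
    [Nontrivial Q] (hQ : IsPGroup 2 Q) {x : G} (hx : Odd (orderOf x))
    (h2x : ∀ g : G, orderOf g ≠ 2 * orderOf x) :
    ∃ a b : G, orderOf a = 2 ∧ orderOf b = 2 ∧ orderOf (a * b) = 2 := by
  have := hQ.center_nontrivial
  obtain ⟨z, hz⟩ := exists_prime_orderOf_dvd_card' (G := Subgroup.center Q) 2
    (((hQ.to_subgroup _).card_eq_or_dvd).resolve_left Finite.one_lt_card.ne')
  let a : G := (z : Q)
  have ha : orderOf a = 2 := by simpa [a]
  let b : G := x * a * x⁻¹
  have hb : orderOf b = 2 := (MulAut.conj x).orderOf_eq a ▸ ha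
  have hbQ : b ∈ Q := Subgroup.Normal.conj_mem ‹_› _ (z : Q).2 x
  have hab : Commute a b := by
    exact congr(($((Subgroup.mem_center_iff.1 z.2 ⟨b, hbQ⟩).symm) : G))
  refine ⟨a, b, ha, hb, orderOf_eq_prime ?_ fun h => ?_⟩
  · rw [hab.mul_pow, ← ha, pow_orderOf_eq_one, ha, ← hb, pow_orderOf_eq_one, mul_one]
  · have hba : x * a * x⁻¹ = a :=
      (eq_inv_of_mul_eq_one_right h).trans (inv_eq_self_of_orderOf_eq_two ha)
    have hcomm : Commute a x := (mul_inv_eq_iff_eq_mul.1 hba).symm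
    have hcop : (orderOf a).Coprime (orderOf x) := ha ▸ Nat.coprime_two_left.2 hx
    exact h2x (a * x) (ha ▸ hcomm.orderOf_mul_eq_mul_orderOf_of_coprime hcop)

section ConjRep

open scoped IsMulCommutative

theorem eq_one_of_mul_natCast_eq_natCast {G : Type*} [Group G] {V : Subgroup G} [IsMulCommutative V]
    {r : ℕ} (hV : IsPGroup r V) {n : ℕ} (hn : r.Coprime n)
    {f : Module.End ℤ (Additive V)} (hf : f * n = n) : f = 1 := by
  ext v
  obtain ⟨u, hu⟩ := (hV.powEquiv hn).surjective v.toMul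
  obtain rfl : n • Additive.ofMul u = v := hu
  simpa using congr((($hf (Additive.ofMul u)).toMul : G))

variable {G : Type*} [Group G] (V : Subgroup G) [V.Normal] [IsMulCommutative V]

/-- The conjugation action of `G` on an abelian normal subgroup `V`, regarded as a representation
on the `ℤ`-module underlying `V`. -/
noncomputable def conjRep : Representation ℤ G (Additive V) :=
  (Representation.ofMulDistribMulAction (MulAut V) V).comp MulAut.conjNormal

variable {V}

theorem coe_conjRep_apply (g : G) (v : Additive V) :
    ((conjRep V g v).toMul : G) = g * v.toMul * g⁻¹ := rfl

variable {r : ℕ} [Fact r.Prime] (hV : IsPGroup r V)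

include hV

variable [Finite G] {y : G} (hy : r.Coprime (orderOf y)) (hyr : ∀ g : G, orderOf g ≠ orderOf y * r)

include hy hyr

theorem eq_zero_of_conjRep_apply_eq {v : Additive V} (hv : conjRep V y v = v) : v = 0 := by
  by_contra hv0
  have hr : r ∣ orderOf v.toMul := hV.dvd_orderOf hv0
  have hcomm : Commute y (v.toMul : G) := by
    rw [commute_iff_eq, ← mul_inv_eq_iff_eq_mul, ← coe_conjRep_apply, hv]
  have hord : orderOf ((v.toMul : G) ^ (orderOf v.toMul / r)) = r := by
    rw [← Subgroup.coe_pow, Subgroup.orderOf_coe,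
      orderOf_pow_orderOf_div (orderOf_pos v.toMul).ne' hr]
  apply hyr (y * (v.toMul : G) ^ (orderOf v.toMul / r))
  rw [(hcomm.pow_right _).orderOf_mul_eq_mul_orderOf_of_coprime (hord.symm ▸ hy.symm), hord]

theorem conjRep_ne_one [Nontrivial V] : conjRep V y ≠ 1 := by
  intro h
  obtain ⟨v, hv⟩ := exists_ne (0 : Additive V)
  exact hv (eq_zero_of_conjRep_apply_eq hV hy hyr (by simp [h]))

theorem geom_sum_conjRep_eq_zero : ∑ i ∈ Finset.range (orderOf y), conjRep V y ^ i = 0 := by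
  refine LinearMap.ext fun v => ?_
  refine eq_zero_of_conjRep_apply_eq hV hy hyr ?_
  have hgeom := mul_geom_sum (conjRep V y) (orderOf y)
  rw [← map_pow, pow_orderOf_eq_one, map_one, sub_self, sub_mul, one_mul, sub_eq_zero] at hgeom
  exact congr($hgeom v)

end ConjRep

section Coset

variable {G : Type*} [Group G] [Finite G] {Q : Subgroup G} [Q.Normal] {x : G}

theorem orderOf_mul_eq_of_mem_of_isPGroup {p q : ℕ} [hp : Fact p.Prime] [hq : Fact q.Prime]
    (hpq : p ≠ q) (hQ : IsPGroup p Q) (hx : orderOf x = q) (hord : ∀ g : G, orderOf g ≠ p * q)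
    {g : G} (hg : g ∈ Q) : orderOf (g * x) = q := by
  have hcop := (Nat.coprime_primes hp.out hq.out).2 hpq
  have hxQ : x ∉ Q := fun h => by
    have := hQ.orderOf_coprime hcop ⟨x, h⟩
    rw [Subgroup.orderOf_mk, hx, Nat.coprime_self] at this
    exact hq.out.ne_one this
  have hmk : (↑(g * x) : G ⧸ Q) = x := by simp [(QuotientGroup.eq_one_iff g).2 hg]
  have hmkx : orderOf (x : G ⧸ Q) = q := orderOf_eq_prime
    (by rw [← QuotientGroup.mk_pow, ← hx, pow_orderOf_eq_one]; rfl)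
    fun h => hxQ ((QuotientGroup.eq_one_iff x).1 h)
  have hqdvd : q ∣ orderOf (g * x) :=
    hmkx ▸ hmk ▸ orderOf_map_dvd (QuotientGroup.mk' Q) (g * x)
  have hpow : (g * x) ^ q ∈ Q := by
    rw [← QuotientGroup.eq_one_iff, QuotientGroup.mk_pow, hmk, ← hmkx, pow_orderOf_eq_one]
  refine orderOf_eq_prime (by_contra fun hne => ?_) fun h => ?_
  · have hpdvd : p ∣ orderOf (g * x) := by
      have := hQ.dvd_orderOf (g := ⟨_, hpow⟩) (by simpa [Subtype.ext_iff] using hne)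
      rw [Subgroup.orderOf_mk] at this
      exact this.trans (orderOf_pow_dvd q)
    exact hord _ (orderOf_pow_orderOf_div (orderOf_pos (g * x)).ne'
      (hcop.mul_dvd_of_dvd_of_dvd hpdvd hqdvd))
  · simp [h, hq.out.ne_one] at hqdvd

variable {q : ℕ} (hx : ∀ g ∈ Q, (g * x) ^ q = 1) {R : Type*} [Ring R] (ρ : G →* R)

include hx

theorem sum_map_mul_pow [Fintype Q] (hq : 1 < q) {i : ℕ} (hi : i.Coprime q) :
    ∑ g : Q, ρ (g * x) ^ i = (∑ g : Q, ρ g) * ρ x ^ i := by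
  have hmem (g : Q) : (g * x) ^ i * (x ^ i)⁻¹ ∈ Q := by
    rw [← QuotientGroup.eq_one_iff]
    simp [(QuotientGroup.eq_one_iff (g : G)).2 g.2]
  let φ (g : Q) : Q := ⟨_, hmem g⟩
  have hφ : Bijective φ := Finite.injective_iff_bijective.1 fun g h hgh => by
    have hpow : (g * x) ^ i = (h * x) ^ i := by simpa [φ] using hgh
    obtain ⟨m, -, hm⟩ := Nat.exists_mul_mod_eq_one_of_coprime hi hq
    have hroot (k : Q) : ((k * x) ^ i) ^ m = k * x := by
      rw [← pow_mul, pow_eq_pow_mod _ (hx k k.2), hm, pow_one]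
    exact Subtype.ext (mul_right_cancel ((hroot g).symm.trans (hpow ▸ hroot h)))
  rw [Finset.sum_mul, ← hφ.sum_comp fun g : Q => ρ g * ρ x ^ i]
  simp [φ, ← map_pow, ← map_mul]

theorem map_mul_natCard_eq_natCard (hq : q.Prime)
    (hsum : ∀ g ∈ Q, ∑ i ∈ Finset.range q, ρ (g * x) ^ i = 0) {h : G} (hh : h ∈ Q) :
    ρ h * Nat.card Q = Nat.card Q := by
  cases nonempty_fintype Q
  set S := ∑ g : Q, ρ g
  have hS : S = Nat.card Q := by
    have hx1 : ∑ i ∈ Finset.Ico 1 q, ρ x ^ i = -1 := by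
      have := hsum 1 Q.one_mem
      rw [one_mul, Finset.range_eq_Ico, Finset.sum_eq_sum_Ico_succ_bot hq.pos, pow_zero] at this
      exact (neg_eq_of_add_eq_zero_right this).symm
    have hdouble : ∑ i ∈ Finset.range q, ∑ g : Q, ρ (g * x) ^ i = 0 := by
      rw [Finset.sum_comm]
      exact Finset.sum_eq_zero fun g _ => hsum g g.2
    rw [Finset.range_eq_Ico, Finset.sum_eq_sum_Ico_succ_bot hq.pos, Finset.sum_congr rfl fun i hi =>
      sum_map_mul_pow hx ρ hq.one_lt (Nat.coprime_of_lt_prime (by grind) (by grind) hq).symm,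
      ← Finset.mul_sum, hx1] at hdouble
    simpa [← sub_eq_add_neg, sub_eq_zero, eq_comm (a := S)] using hdouble
  calc ρ h * Nat.card Q = ∑ g : Q, ρ h * ρ g := by rw [← hS, Finset.mul_sum]
    _ = S := by simpa using Equiv.sum_comp (Equiv.mulLeft (⟨h, hh⟩ : Q)) fun g => ρ g
    _ = Nat.card Q := hS

end Coset

section Conclusion

variable {G : Type*} [Group G] [Finite G] {V : Subgroup G} [V.Normal] [IsMulCommutative V]
  {r : ℕ} [hr : Fact r.Prime] (hV : IsPGroup r V)

include hV

theorem isPGroup_le_ker_conjRep {p q : ℕ} [hp : Fact p.Prime] [hq : Fact q.Prime] (hpq : p ≠ q)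
    (hrp : r ≠ p) (hrq : r ≠ q) (hord : ∀ g : G, orderOf g ≠ p * q)
    (hqr : ∀ g : G, orderOf g ≠ q * r) {Q : Subgroup G} (hQ : IsPGroup p Q) {x : G}
    (hxQ : x ∈ normalizer (Q : Set G)) (hx : orderOf x = q) : Q ≤ (conjRep V).ker := by
  intro h hh
  let N := normalizer (Q : Set G)
  have hQN : IsPGroup p (Q.subgroupOf N) := hQ.comap_subtype
  have hcoset : ∀ g ∈ Q.subgroupOf N, orderOf (g * ⟨x, hxQ⟩) = q := fun g hg =>
    orderOf_mul_eq_of_mem_of_isPGroup hpq hQN (by rwa [Subgroup.orderOf_mk])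
      (orderOf_ne_subgroup hord N) hg
  have hsum : ∀ g ∈ Q.subgroupOf N,
      ∑ i ∈ Finset.range q, ((conjRep V).comp N.subtype) (g * ⟨x, hxQ⟩) ^ i = 0 := by
    intro g hg
    have hgx : orderOf ((g : G) * x) = q :=
      (Subgroup.orderOf_coe (g * ⟨x, hxQ⟩)).trans (hcoset g hg)
    have := geom_sum_conjRep_eq_zero hV (y := g * x)
      (by rw [hgx]; exact (Nat.coprime_primes hr.out hq.out).2 hrq) (by rwa [hgx])
    rwa [hgx] at this
  have hfix := map_mul_natCard_eq_natCard
    (fun g hg => orderOf_dvd_iff_pow_eq_one.1 (hcoset g hg).dvd)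
    ((conjRep V).comp N.subtype) hq.out hsum (h := ⟨h, Subgroup.le_normalizer hh⟩) hh
  obtain ⟨n, hn⟩ := IsPGroup.iff_card.1 hQN
  refine eq_one_of_mul_natCast_eq_natCast hV ?_ hfix
  rw [hn]
  exact ((Nat.coprime_primes hr.out hp.out).2 hrp).pow_right n

variable [Nontrivial V]

theorem exists_orderOf_eq_two_mul_of_commuting_involutions (hr2 : r ≠ 2) {a b : G}
    (ha : orderOf a = 2) (hb : orderOf b = 2) (hab : orderOf (a * b) = 2) :
    ∃ g : G, orderOf g = 2 * r := by
  by_contra! h2r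
  have hcop : r.Coprime 2 := (Nat.coprime_primes hr.out Nat.prime_two).2 hr2
  have hneg {y : G} (hy : orderOf y = 2) : conjRep V y = -1 := by
    have := geom_sum_conjRep_eq_zero hV (y := y) (hy ▸ hcop) (hy ▸ h2r)
    rw [hy, Finset.sum_range_succ, Finset.sum_range_one, pow_zero, pow_one] at this
    exact (neg_eq_of_add_eq_zero_right this).symm
  refine conjRep_ne_one hV (y := a * b) (hab ▸ hcop) (hab ▸ h2r) ?_
  rw [map_mul, hneg ha, hneg hb, neg_one_mul, neg_neg]

theorem exists_orderOf_eq_two_mul {π : G →* alternatingGroup (Fin 5)} (hπ : Surjective π)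
    (h6 : ∀ g : G, orderOf g ≠ 6) (hr2 : r ≠ 2) : ∃ g : G, orderOf g = 2 * r := by
  obtain ⟨Q, hQ, hQker, x, hxQ, hx⟩ := exists_isPGroup_two_normalizer_orderOf_eq_three hπ
  let N := normalizer (Q : Set G)
  have : Nontrivial (Q.subgroupOf N) := by
    rw [Subgroup.nontrivial_iff_ne_bot, Ne, Subgroup.subgroupOf_eq_bot,
      disjoint_of_le_iff_left_eq_bot Subgroup.le_normalizer]
    rintro rfl
    exact hQker bot_le
  have hQN : IsPGroup 2 (Q.subgroupOf N) := hQ.comap_subtype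
  have hxN : orderOf (⟨x, hxQ⟩ : N) = 3 := by rwa [Subgroup.orderOf_mk]
  obtain ⟨a, b, ha, hb, hab⟩ := exists_commuting_involutions hQN
    (by rw [hxN]; decide) (by rw [hxN]; exact orderOf_ne_subgroup h6 N)
  exact exists_orderOf_eq_two_mul_of_commuting_involutions hV hr2
    ((Subgroup.orderOf_coe a).trans ha) ((Subgroup.orderOf_coe b).trans hb)
    ((Subgroup.orderOf_coe (a * b)).trans hab)

theorem exists_orderOf_eq_three_mul {π : G →* alternatingGroup (Fin 5)} (hπ : Surjective π)
    (h6 : ∀ g : G, orderOf g ≠ 6) (hr2 : r ≠ 2) (hr3 : r ≠ 3) : ∃ g : G, orderOf g = 3 * r := by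
  by_contra! h3r
  obtain ⟨Q, hQ, hQker, x, hxQ, hx⟩ := exists_isPGroup_two_normalizer_orderOf_eq_three hπ
  have hle : Q ≤ (conjRep V).ker :=
    isPGroup_le_ker_conjRep hV (by decide) hr2 hr3 h6 h3r hQ hxQ hx
  have htop : (conjRep V).ker.map π = ⊤ :=
    (Subgroup.Normal.map inferInstance π hπ).eq_bot_or_eq_top.resolve_left fun h =>
      hQker (hle.trans ((Subgroup.map_eq_bot_iff _).1 h))
  obtain ⟨a, ha⟩ := exists_prime_orderOf_dvd_card' (G := alternatingGroup (Fin 5)) 3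
    (by rw [natCard_alternatingGroup_five]; decide)
  obtain ⟨g, hg, hga⟩ := exists_mem_orderOf_eq_of_mem_map π
    (htop ▸ Subgroup.mem_top a : a ∈ (conjRep V).ker.map π)
  rw [ha] at hga
  exact conjRep_ne_one hV (y := g) (hga ▸ (Nat.coprime_primes hr.out Nat.prime_three).2 hr3)
    (hga ▸ h3r) hg

end Conclusion

theorem two_three_adjacent_to_all_other_primes_general
    (G : Type*) [Group G] [Finite G] (hG : IsPseudoSolvable G) (hns : ¬ Group.IsSolvable G)
    (h6 : ¬ ∃ g : G, orderOf g = 6) :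
    ∀ r : ℕ, r.Prime → r ∣ Nat.card G → r ∉ ({2, 3, 5} : Set ℕ) →
      (∃ g : G, orderOf g = 2 * r) ∧ (∃ g : G, orderOf g = 3 * r) := by
  intro r hr hrG hr235
  have : Fact r.Prime := ⟨hr⟩
  obtain ⟨hr2, hr3, hr5⟩ : r ≠ 2 ∧ r ≠ 3 ∧ r ≠ 5 := by simpa using hr235
  replace h6 : ∀ g : G, orderOf g ≠ 6 := not_exists.1 h6
  obtain ⟨π, hπ⟩ := (hG.isSolvable_or_exists_surjective h6).resolve_left hns
  obtain ⟨M, hM, V, hVN, hVcomm, hVnt, hV⟩ := exists_map_eq_top_and_normal_isPGroup hπ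
    (dvd_natCard_ker_of_surjective hπ hr hr2 hr3 hr5 hrG)
  have hπM : Surjective (π.comp M.subtype) := by
    rw [← MonoidHom.range_eq_top, MonoidHom.range_comp, M.range_subtype, hM]
  have h6M := orderOf_ne_subgroup h6 M
  obtain ⟨x, hx⟩ := exists_orderOf_eq_two_mul hV hπM h6M hr2
  obtain ⟨y, hy⟩ := exists_orderOf_eq_three_mul hV hπM h6M hr2 hr3
  exact ⟨⟨x, (Subgroup.orderOf_coe x).trans hx⟩, y, (Subgroup.orderOf_coe y).trans hy⟩

/-- If `G` is a non-solvable pseudo-solvable group whose prime-graph complement has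
the triangle `{2,3,5}`, then for every other prime `r` dividing `|G|`, neither `2 - r`
nor `3 - r` is an edge of the complement: `G` has elements of orders `2r` and `3r`. -/
theorem two_three_adjacent_to_all_other_primes
    (G : Type*) [Group G] [Finite G] (hG : IsPseudoSolvable G) (hns : ¬ IsSolvable G)
    (h6 : ¬ ∃ g : G, orderOf g = 6)
    (h10 : ¬ ∃ g : G, orderOf g = 10)
    (h15 : ¬ ∃ g : G, orderOf g = 15) :
    ∀ r : ℕ, r.Prime → r ∣ Nat.card G → r ∉ ({2, 3, 5} : Set ℕ) →
      (∃ g : G, orderOf g = 2 * r) ∧ (∃ g : G, orderOf g = 3 * r) :=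
  two_three_adjacent_to_all_other_primes_general G hG hns h6
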